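/- Let (σ_j)_{j≥1} be a sequence of positive real numbers satisfying σ_j²/(β j^α) → 1 as j → ∞ for some constants α > 0 and β > 0, let ω_j = ω(σ_j), and let n_d(ε) be the average case approximation complexity built from (ω_j). If α > 1, then for every ε ∈ (0,1), sup_{d∈ℕ} n_d(ε) < ∞. If α ≤ 1, then for every ε ∈ (0,1), n_d(ε) → ∞ as d → ∞. -/

import Mathlib

open Filter Set

/-- `ω(σ) = (1 + (σ²/2)(1 + √(1 + 4/σ²)))⁻¹`. -/
noncomputable def omegaFn (σ : ℝ) : ℝ :=
  (1 + σ ^ 2 / 2 * (1 + Real.sqrt (1 + 4 / σ ^ 2)))⁻¹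

/-- The average case approximation complexity `n_d(ε)` built from the sequence `ω`:
the minimal number `n ≥ 1` such that some finite set `S` of multi-indices with `|S| ≤ n`
captures all but `ε²` of the total mass of the eigenvalues
`λ_d(k) = ∏_{j<d} (1 - ω_j) ω_j^{k_j}`, `k : Fin d → ℕ`. -/
noncomputable def avgComplexity (ω : ℕ → ℝ) (d : ℕ) (ε : ℝ) : ℕ :=
  sInf {n : ℕ | 1 ≤ n ∧ ∃ S : Finset (Fin d → ℕ), S.card ≤ n ∧
    ∑' k : {k : Fin d → ℕ // k ∉ S}, ∏ j : Fin d, (1 - ω j.1) * ω j.1 ^ k.1 j ≤ ε ^ 2}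

lemma aux_box (ω : ℕ → ℝ) (d : ℕ) (m : ℕ → ℕ) :
    ∑ k ∈ Fintype.piFinset (fun j : Fin d => Finset.range (m j.1)),
      ∏ j : Fin d, (1 - ω j.1) * ω j.1 ^ k j = ∏ j : Fin d, (1 - ω j.1 ^ m j.1) := by
  rw [← Finset.prod_univ_sum (fun j : Fin d => Finset.range (m j.1))
    (fun j i => (1 - ω j.1) * ω j.1 ^ i)]
  refine Finset.prod_congr rfl fun j _ => ?_
  rw [← Finset.mul_sum, mul_neg_geom_sum]

lemma aux_hasSum (ω : ℕ → ℝ) (h0 : ∀ j, 0 < ω j) (h1 : ∀ j, ω j < 1) (d : ℕ) :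
    HasSum (fun k : Fin d → ℕ => ∏ j : Fin d, (1 - ω j.1) * ω j.1 ^ k j) 1 := by
  have hn : ∀ k : Fin d → ℕ, 0 ≤ ∏ j : Fin d, (1 - ω j.1) * ω j.1 ^ k j := fun k =>
    Finset.prod_nonneg fun j _ => mul_nonneg (sub_nonneg.2 (h1 _).le) (pow_nonneg (h0 _).le _)
  refine hasSum_of_isLUB_of_nonneg _ hn ⟨?_, ?_⟩
  · rintro _ ⟨T, rfl⟩
    dsimp only
    let M : ℕ := T.sup (fun k => Finset.univ.sup k) + 1
    have hsub : T ⊆ Fintype.piFinset (fun _ : Fin d => Finset.range M) := by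
      intro k hk
      rw [Fintype.mem_piFinset]
      intro j
      rw [Finset.mem_range]
      have a : k j ≤ Finset.univ.sup k := Finset.le_sup (f := k) (Finset.mem_univ j)
      have b : Finset.univ.sup k ≤ T.sup (fun k => Finset.univ.sup k) :=
        Finset.le_sup (f := fun k : Fin d → ℕ => Finset.univ.sup k) hk
      omega
    refine (Finset.sum_le_sum_of_subset_of_nonneg hsub fun k _ _ => hn k).trans ?_
    rw [aux_box ω d (fun _ => M)]
    refine Finset.prod_le_one (fun j _ => ?_) (fun j _ => ?_)
    · exact sub_nonneg.2 (pow_le_one₀ (h0 _).le (h1 _).le)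
    · have := pow_pos (h0 j.1) M
      linarith
  · intro b hb
    have ht : Tendsto (fun M : ℕ => ∏ j : Fin d, (1 - ω j.1 ^ M)) atTop
        (nhds (∏ _j : Fin d, (1 - 0 : ℝ))) :=
      tendsto_finsetProd _ fun j _ =>
        tendsto_const_nhds.sub (tendsto_pow_atTop_nhds_zero_of_lt_one (h0 _).le (h1 _))
    simp only [sub_zero, Finset.prod_const_one] at ht
    refine le_of_tendsto' ht fun M => ?_
    rw [← aux_box ω d (fun _ => M)]
    exact hb ⟨_, rfl⟩

lemma aux_compl (ω : ℕ → ℝ) (h0 : ∀ j, 0 < ω j) (h1 : ∀ j, ω j < 1) (d : ℕ)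
    (S : Finset (Fin d → ℕ)) :
    ∑ k ∈ S, (∏ j : Fin d, (1 - ω j.1) * ω j.1 ^ k j) +
      ∑' k : {k : Fin d → ℕ // k ∉ S}, ∏ j : Fin d, (1 - ω j.1) * ω j.1 ^ k.1 j = 1 := by
  have h := aux_hasSum ω h0 h1 d
  exact (h.summable.sum_add_tsum_subtype_compl S).trans h.tsum_eq

lemma aux_bern {ι : Type*} (s : Finset ι) (a : ι → ℝ) (h0 : ∀ i, 0 ≤ a i) (h1 : ∀ i, a i ≤ 1) :
    1 - ∑ i ∈ s, a i ≤ ∏ i ∈ s, (1 - a i) := by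
  classical
  induction s using Finset.induction_on with
  | empty => simp
  | insert i s hi ih =>
    rw [Finset.sum_insert hi, Finset.prod_insert hi]
    have hs : 0 ≤ ∑ i ∈ s, a i := Finset.sum_nonneg fun i _ => h0 i
    nlinarith [h0 i, h1 i, mul_le_mul_of_nonneg_left ih (sub_nonneg.2 (h1 i)), mul_nonneg (h0 i) hs]

lemma aux_bounded (ω : ℕ → ℝ) (h0 : ∀ j, 0 < ω j) (h1 : ∀ j, ω j < 1) (hs : Summable ω)
    (ε : ℝ) (hε : 0 < ε) : ∃ C : ℕ, ∀ d : ℕ, avgComplexity ω d ε ≤ C := by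
  have hε2 : 0 < ε ^ 2 / 2 := by positivity
  obtain ⟨J, hJ⟩ := ((tendsto_sum_nat_add ω).eventually_lt_const hε2).exists
  have ht : Tendsto (fun M : ℕ => ∑ j ∈ Finset.range J, ω j ^ M) atTop
      (nhds (∑ _j ∈ Finset.range J, (0 : ℝ))) :=
    tendsto_finsetSum _ fun j _ => tendsto_pow_atTop_nhds_zero_of_lt_one (h0 _).le (h1 _)
  rw [Finset.sum_const_zero] at ht
  obtain ⟨M, hM, hM1⟩ := ((ht.eventually_lt_const hε2).and (eventually_ge_atTop 1)).exists
  refine ⟨M ^ J, fun d => Nat.sInf_le ⟨Nat.one_le_pow _ _ hM1, ?_⟩⟩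
  let m : ℕ → ℕ := fun j => if j < J then M else 1
  have hm1 : ∀ j, 1 ≤ m j := fun j => by dsimp only [m]; split_ifs <;> omega
  have hsub : Finset.range d ⊆ Finset.range (J + d) := by
    intro x hx
    rw [Finset.mem_range] at *
    omega
  refine ⟨Fintype.piFinset (fun j : Fin d => Finset.range (m j.1)), ?_, ?_⟩
  · rw [Fintype.card_piFinset]
    simp only [Finset.card_range]
    rw [Fin.prod_univ_eq_prod_range m d]
    refine (Finset.prod_le_prod_of_subset_of_one_le' hsub fun i _ _ => hm1 i).trans ?_
    rw [Finset.prod_range_add]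
    have a : ∏ x ∈ Finset.range J, m x = M ^ J := by
      rw [Finset.prod_congr rfl (g := fun _ => M)]
      · simp
      · intro x hx
        simp [m, Finset.mem_range.1 hx]
    have b : ∏ x ∈ Finset.range d, m (J + x) = 1 := by
      refine Finset.prod_eq_one fun x _ => ?_
      simp [m]
    rw [a, b, mul_one]
  · have hc := aux_compl ω h0 h1 d (Fintype.piFinset (fun j : Fin d => Finset.range (m j.1)))
    rw [aux_box] at hc
    have hb := aux_bern (Finset.univ : Finset (Fin d)) (fun j => ω j.1 ^ m j.1)
      (fun j => pow_nonneg (h0 _).le _) (fun j => pow_le_one₀ (h0 _).le (h1 _).le)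
    rw [Fin.sum_univ_eq_sum_range (fun j => ω j ^ m j) d] at hb
    have hle : ∑ j ∈ Finset.range d, ω j ^ m j ≤ ∑ j ∈ Finset.range (J + d), ω j ^ m j :=
      Finset.sum_le_sum_of_subset_of_nonneg hsub fun i _ _ => pow_nonneg (h0 _).le _
    rw [Finset.sum_range_add] at hle
    have a : ∑ x ∈ Finset.range J, ω x ^ m x = ∑ x ∈ Finset.range J, ω x ^ M := by
      refine Finset.sum_congr rfl fun x hx => ?_
      simp [m, Finset.mem_range.1 hx]
    have b : ∑ x ∈ Finset.range d, ω (J + x) ^ m (J + x) ≤ ∑' k, ω (k + J) := by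
      have e : ∑ x ∈ Finset.range d, ω (J + x) ^ m (J + x) = ∑ x ∈ Finset.range d, ω (x + J) := by
        refine Finset.sum_congr rfl fun x _ => ?_
        simp [m, add_comm]
      rw [e]
      exact ((summable_nat_add_iff J).2 hs).sum_le_tsum _ fun i _ => (h0 _).le
    linarith

lemma aux_unbounded (ω : ℕ → ℝ) (h0 : ∀ j, 0 < ω j) (h1 : ∀ j, ω j < 1) (hs : ¬ Summable ω)
    (ε : ℝ) (hε : 0 < ε) (hε1 : ε < 1) : Tendsto (fun d => avgComplexity ω d ε) atTop atTop := by
  have hdiv := (not_summable_iff_tendsto_nat_atTop_of_nonneg (fun j => (h0 j).le)).1 hs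
  have hP : Tendsto (fun d : ℕ => ∏ j ∈ Finset.range d, (1 - ω j)) atTop (nhds 0) := by
    refine squeeze_zero (fun d => Finset.prod_nonneg fun j _ => sub_nonneg.2 (h1 j).le) (fun d => ?_)
      (Real.tendsto_exp_neg_atTop_nhds_zero.comp hdiv)
    simp only [Function.comp]
    rw [← Finset.sum_neg_distrib, Real.exp_sum]
    refine Finset.prod_le_prod (fun j _ => sub_nonneg.2 (h1 j).le) fun j _ => ?_
    have := Real.add_one_le_exp (-ω j)
    linarith
  rw [tendsto_atTop]
  intro N
  have hN : Tendsto (fun d : ℕ => (N : ℝ) * ∏ j ∈ Finset.range d, (1 - ω j)) atTop (nhds 0) := by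
    simpa using hP.const_mul (N : ℝ)
  have he : 0 < 1 - ε ^ 2 := by nlinarith
  filter_upwards [hN.eventually_lt_const he] with d hd
  have hne : {n : ℕ | 1 ≤ n ∧ ∃ S : Finset (Fin d → ℕ), S.card ≤ n ∧
    ∑' k : {k : Fin d → ℕ // k ∉ S}, ∏ j : Fin d, (1 - ω j.1) * ω j.1 ^ k.1 j ≤ ε ^ 2}.Nonempty := by
    have hh : Tendsto (fun S : Finset (Fin d → ℕ) =>
      ∑ k ∈ S, ∏ j : Fin d, (1 - ω j.1) * ω j.1 ^ k j) atTop (nhds 1) := aux_hasSum ω h0 h1 d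
    obtain ⟨S, hS⟩ := (hh.eventually_const_lt (show 1 - ε ^ 2 < 1 by nlinarith)).exists
    refine ⟨S.card + 1, by omega, S, by omega, ?_⟩
    have := aux_compl ω h0 h1 d S
    linarith
  obtain ⟨-, S, hS, hle⟩ := Nat.sInf_mem hne
  change S.card ≤ avgComplexity ω d ε at hS
  have hc := aux_compl ω h0 h1 d S
  have hb : ∑ k ∈ S, (∏ j : Fin d, (1 - ω j.1) * ω j.1 ^ k j) ≤
      S.card • ∏ j ∈ Finset.range d, (1 - ω j) := by
    refine Finset.sum_le_card_nsmul _ _ _ fun k _ => ?_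
    rw [← Fin.prod_univ_eq_prod_range (fun j => 1 - ω j) d]
    refine Finset.prod_le_prod (fun j _ => mul_nonneg (sub_nonneg.2 (h1 _).le)
      (pow_nonneg (h0 _).le _)) fun j _ => ?_
    exact mul_le_of_le_one_right (sub_nonneg.2 (h1 _).le) (pow_le_one₀ (h0 _).le (h1 _).le)
  rw [nsmul_eq_mul] at hb
  by_contra hlt
  have hSN : (S.card : ℝ) ≤ N := by
    have : S.card ≤ N := by omega
    exact_mod_cast this
  have hPn : 0 ≤ ∏ j ∈ Finset.range d, (1 - ω j) :=
    Finset.prod_nonneg fun j _ => sub_nonneg.2 (h1 j).le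
  have := mul_le_mul_of_nonneg_right hSN hPn
  linarith

lemma aux_omega (σ : ℝ) (h : 0 < σ) : 0 < omegaFn σ ∧ omegaFn σ < 1 ∧
    omegaFn σ ≤ 1 / σ ^ 2 ∧ 1 / (σ ^ 2 + 2) ≤ omegaFn σ := by
  have hs : 0 < σ ^ 2 := by positivity
  unfold omegaFn
  generalize σ ^ 2 = s at hs
  have h4 : 0 < 4 / s := by positivity
  have l : 1 ≤ Real.sqrt (1 + 4 / s) := Real.one_le_sqrt.2 (by linarith)
  have u : Real.sqrt (1 + 4 / s) ≤ 1 + 2 / s := by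
    apply Real.sqrt_le_iff.2
    constructor
    · positivity
    · have : (1 + 2 / s) ^ 2 = 1 + 4 / s + (2 / s) ^ 2 := by ring
      rw [this]
      nlinarith [sq_nonneg (2 / s)]
  have l2 : 1 + s ≤ 1 + s / 2 * (1 + Real.sqrt (1 + 4 / s)) := by nlinarith
  have u2 : 1 + s / 2 * (1 + Real.sqrt (1 + 4 / s)) ≤ s + 2 := by
    have : s / 2 * (1 + Real.sqrt (1 + 4 / s)) ≤ s / 2 * (1 + (1 + 2 / s)) := by gcongr
    have e : s / 2 * (1 + (1 + 2 / s)) = s + 1 := by field_simp; ring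
    linarith
  refine ⟨by positivity, inv_lt_one_of_one_lt₀ (by linarith), ?_, ?_⟩
  · rw [← one_div]
    exact one_div_le_one_div_of_le hs (by linarith)
  · rw [← one_div]
    exact one_div_le_one_div_of_le (by positivity) u2

/-- If `σ_j² ~ β j^α` then for `α > 1` the complexity is bounded in `d` for every fixed
`ε ∈ (0,1)`, while for `α ≤ 1` it tends to infinity as `d → ∞` for every fixed `ε ∈ (0,1)`. -/
theorem complexity_dichotomy_polynomial_scale (σ : ℕ → ℝ) (hσ : ∀ j, 0 < σ j)
    (α β : ℝ) (hα : 0 < α) (hβ : 0 < β)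
    (hasymp : Tendsto (fun j : ℕ => (σ j) ^ 2 / (β * (j : ℝ) ^ α)) atTop (nhds 1)) :
    (1 < α → ∀ ε ∈ Set.Ioo (0 : ℝ) 1, ∃ C : ℕ, ∀ d : ℕ,
        avgComplexity (fun j => omegaFn (σ j)) d ε ≤ C)
    ∧ (α ≤ 1 → ∀ ε ∈ Set.Ioo (0 : ℝ) 1,
        Tendsto (fun d : ℕ => avgComplexity (fun j => omegaFn (σ j)) d ε) atTop atTop) := by
  have h0 : ∀ j, 0 < omegaFn (σ j) := fun j => (aux_omega _ (hσ j)).1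
  have h1 : ∀ j, omegaFn (σ j) < 1 := fun j => (aux_omega _ (hσ j)).2.1
  refine ⟨fun h ε hε => aux_bounded _ h0 h1 ?_ ε hε.1,
    fun h ε hε => aux_unbounded _ h0 h1 ?_ ε hε.1 hε.2⟩
  · have hs : Summable (fun j : ℕ => 2 / β * (1 / (j : ℝ) ^ α)) :=
      (Real.summable_one_div_nat_rpow.2 h).mul_left _
    refine Summable.of_norm_bounded_eventually_nat hs ?_
    filter_upwards [hasymp.eventually_const_lt (show (1 / 2 : ℝ) < 1 by norm_num),
      eventually_ge_atTop 1] with j hj hj1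
    have hjp : (0 : ℝ) < j := by exact_mod_cast hj1
    have hp : 0 < β * (j : ℝ) ^ α := by positivity
    rw [lt_div_iff₀ hp] at hj
    rw [Real.norm_of_nonneg (h0 j).le]
    refine (aux_omega _ (hσ j)).2.2.1.trans ?_
    refine (one_div_le_one_div_of_le (by positivity) hj.le).trans (le_of_eq ?_)
    field_simp
  · intro hs
    apply Real.not_summable_one_div_natCast
    refine Summable.of_norm_bounded_eventually_nat (hs.mul_left (2 * β + 2)) ?_
    filter_upwards [hasymp.eventually_lt_const (show (1 : ℝ) < 2 by norm_num),
      eventually_ge_atTop 1] with j hj hj1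
    have hj1' : (1 : ℝ) ≤ j := by exact_mod_cast hj1
    have hjp : (0 : ℝ) < j := by linarith
    have hp : 0 < β * (j : ℝ) ^ α := by positivity
    rw [div_lt_iff₀ hp] at hj
    rw [Real.norm_of_nonneg (by positivity)]
    have hja : (j : ℝ) ^ α ≤ j := by
      simpa using Real.rpow_le_rpow_of_exponent_le hj1' h
    have hlow := (aux_omega _ (hσ j)).2.2.2
    have hd : σ j ^ 2 + 2 ≤ (2 * β + 2) * j := by nlinarith
    have h2 : 1 / ((2 * β + 2) * j) ≤ omegaFn (σ j) :=
      (one_div_le_one_div_of_le (by positivity) hd).trans hlow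
    calc 1 / (j : ℝ) = (2 * β + 2) * (1 / ((2 * β + 2) * j)) := by field_simp
      _ ≤ _ := by gcongr
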